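/- arXiv:1002.1372 — 8 statements merged into one kernel-verified Lean document; each statement's English description precedes it below -/
import Mathlib

section
/- Let K be a subgroup of a group A and let K̄ denote the normal closure of K in A. Then ⁅⊤, K⁆ = ⁅⊤, K̄⁆, i.e. the commutator of A with K equals the commutator of A with the normal closure of K. (Group-theoretic case of Proposition 'kbar': in an ideal-determined unital category, [A,K] = [A,K̄].) -/
/-- For a subgroup `K` of a group `A`, the commutator of `A` with `K` equals
the commutator of `A` with the normal closure of `K`. -/
theorem commutator_top_normalClosure {A : Type*} [Group A] (K : Subgroup A) :
    ⁅(⊤ : Subgroup A), K⁆ = ⁅(⊤ : Subgroup A), Subgroup.normalClosure (K : Set A)⁆ := by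
  apply le_antisymm
  · exact Subgroup.commutator_mono le_rfl Subgroup.le_normalClosure
  · have hN : (⁅(⊤ : Subgroup A), K⁆).Normal :=
      Subgroup.normalizer_eq_top_iff.mp
        (top_le_iff.mp (Subgroup.normalizer_commutator_ge_left ⊤ K))
    have key : ∀ k : A, k ∈ (Subgroup.center (A ⧸ ⁅(⊤ : Subgroup A), K⁆)).comap
        (QuotientGroup.mk' ⁅(⊤ : Subgroup A), K⁆) ↔ ∀ a : A, a * k * a⁻¹ * k⁻¹ ∈ ⁅(⊤ : Subgroup A), K⁆ := by
      intro k
      rw [Subgroup.mem_comap, Subgroup.mem_center_iff,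
        (QuotientGroup.mk'_surjective _).forall]
      refine forall_congr' fun a => ?_
      rw [← commutatorElement_eq_one_iff_mul_comm, ← map_commutatorElement,
        QuotientGroup.mk'_apply, QuotientGroup.eq_one_iff, commutatorElement_def]
    have h : Subgroup.normalClosure (K : Set A) ≤
        (Subgroup.center (A ⧸ ⁅(⊤ : Subgroup A), K⁆)).comap
          (QuotientGroup.mk' ⁅(⊤ : Subgroup A), K⁆) :=
      Subgroup.normalClosure_le_normal fun k hk => (key k).2 fun a =>
        Subgroup.commutator_mem_commutator (Subgroup.mem_top a) hk
    rw [Subgroup.commutator_le]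
    exact fun a _ k hk => (key k).1 (h hk) a
end

section
/- Let H and K be subgroups of a group A, let H ∗ K denote their free product, let Σ : H ∗ K → H × K be the canonical homomorphism induced by the product inclusions, and let ρ : H ∗ K → A be the homomorphism induced by the two subgroup inclusions (the realization map). Then the image under ρ of the kernel of Σ equals the commutator subgroup ⁅H, K⁆ of A. (This is the paper's claim that Higgins' commutator is the regular image of the formal commutator H ⋄ K under the realization map.) -/
open Monoid

theorem map_ker_sigma_aux {A : Type*} [Group A] (H K : Subgroup A) (x : Coprod H K) :
    Coprod.lift H.subtype K.subtype x *
      (((Coprod.lift (MonoidHom.inl H K) (MonoidHom.inr H K) x).1 : A) *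
      ((Coprod.lift (MonoidHom.inl H K) (MonoidHom.inr H K) x).2 : A))⁻¹ ∈ ⁅H, K⁆ := by
  induction x using Coprod.induction_on' with
  | one => simp
  | inl_mul m x ih =>
    have h := (Subgroup.mem_normalizer_iff.1
      (Subgroup.normalizer_commutator_ge_left H K m.2) _).1 ih
    simpa [mul_assoc] using h
  | inr_mul n x ih =>
    have h := (Subgroup.mem_normalizer_iff.1
      (Subgroup.normalizer_commutator_ge_right H K n.2) _).1 ih
    have h2 := Subgroup.inv_mem _ (Subgroup.commutator_mem_commutator
      (Coprod.lift (MonoidHom.inl H K) (MonoidHom.inr H K) x).1.2 n.2)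
    have h3 := Subgroup.mul_mem _ h h2
    simpa [mul_assoc, commutatorElement_def] using h3

/-- Higgins' commutator as the image of the formal commutator: for subgroups
`H`, `K` of a group `A`, with `Σ : H ∗ K → H × K` the canonical homomorphism
and `ρ : H ∗ K → A` the realization map induced by the inclusions, the image
under `ρ` of `ker Σ` equals the commutator subgroup `⁅H, K⁆`. -/
theorem map_ker_sigma_eq_commutator {A : Type*} [Group A] (H K : Subgroup A) :
    Subgroup.map (Coprod.lift H.subtype K.subtype)
        (Coprod.lift (MonoidHom.inl H K) (MonoidHom.inr H K)).ker = ⁅H, K⁆ := by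
  apply le_antisymm
  · rintro _ ⟨x, hx, rfl⟩
    have h := map_ker_sigma_aux H K x
    rw [MonoidHom.mem_ker.1 hx] at h
    simpa using h
  · rw [Subgroup.commutator_le]
    intro h hh k hk
    refine ⟨Coprod.inl (⟨h, hh⟩ : H) * Coprod.inr (⟨k, hk⟩ : K) * Coprod.inl (⟨h, hh⟩ : H)⁻¹ * Coprod.inr (⟨k, hk⟩ : K)⁻¹, ?_, ?_⟩
    · simp [MonoidHom.mem_ker]
    · simp [commutatorElement_def]
end

section
/- Let H and K be groups, let H ∗ K be their free product, and let Σ : H ∗ K → H × K be the canonical homomorphism induced by the inclusions. Then the kernel of Σ is generated, as a subgroup of H ∗ K, by the elements inl(h) * inr(k) * inl(h)⁻¹ * inr(k)⁻¹ for h ∈ H and k ∈ K. (This is the paper's description of the formal commutator H ⋄ K in the category of groups as generated by the words (x, y, x⁻¹, y⁻¹).) -/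
open Monoid

theorem coprod_normal_aux (H K : Type*) [Group H] [Group K] (C : Subgroup (Coprod H K))
    (hC : ∀ (h : H) (k : K), (Coprod.inl h * Coprod.inr k * (Coprod.inl h)⁻¹ * (Coprod.inr k)⁻¹
      : Coprod H K) ∈ C) (x : Coprod H K) :
    ∀ (h : H) (k : K), ∃ c ∈ C, ∃ (h' : H) (k' : K),
      Coprod.inl h * Coprod.inr k * x = c * (Coprod.inl h' * Coprod.inr k') := by
  induction x using Coprod.induction_on' with
  | one => intro h k; exact ⟨1, C.one_mem, h, k, by simp⟩
  | inl_mul m x ih =>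
    intro h k
    obtain ⟨c, hc, h', k', e⟩ := ih (h * m) k
    refine ⟨_, C.mul_mem (C.mul_mem (hC h k) (C.inv_mem (hC (h * m) k))) hc, h', k', ?_⟩
    rw [mul_assoc _ c, ← e]
    simp only [map_mul]
    group
  | inr_mul n x ih =>
    intro h k
    obtain ⟨c, hc, h', k', e⟩ := ih h (k * n)
    refine ⟨c, hc, h', k', ?_⟩
    rw [← e]
    simp only [map_mul, mul_assoc]

/-- The formal commutator `H ⋄ K`: the kernel of the canonical homomorphism
`Σ : H ∗ K → H × K` is generated by the elements
`inl h * inr k * (inl h)⁻¹ * (inr k)⁻¹` for `h ∈ H`, `k ∈ K`. -/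
theorem ker_sigma_eq_closure_commutator_words (H K : Type*) [Group H] [Group K] :
    (Coprod.lift (MonoidHom.inl H K) (MonoidHom.inr H K)).ker =
      Subgroup.closure
        {x : Coprod H K | ∃ h : H, ∃ k : K,
          x = Coprod.inl h * Coprod.inr k * (Coprod.inl h)⁻¹ * (Coprod.inr k)⁻¹} := by
  have hle : Subgroup.closure
        {x : Coprod H K | ∃ h : H, ∃ k : K,
          x = Coprod.inl h * Coprod.inr k * (Coprod.inl h)⁻¹ * (Coprod.inr k)⁻¹} ≤
      (Coprod.lift (MonoidHom.inl H K) (MonoidHom.inr H K)).ker := by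
    rw [Subgroup.closure_le]
    rintro _ ⟨h, k, rfl⟩
    simp [MonoidHom.mem_ker]
  refine le_antisymm (fun x hx => ?_) hle
  obtain ⟨c, hc, h', k', e⟩ := coprod_normal_aux H K (Subgroup.closure
        {x : Coprod H K | ∃ h : H, ∃ k : K,
          x = Coprod.inl h * Coprod.inr k * (Coprod.inl h)⁻¹ * (Coprod.inr k)⁻¹})
    (fun h k => Subgroup.subset_closure ⟨h, k, rfl⟩) x 1 1
  have hc' := hle hc
  rw [MonoidHom.mem_ker] at hx hc'
  have e2 := congrArg (Coprod.lift (MonoidHom.inl H K) (MonoidHom.inr H K)) e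
  simp only [map_mul, map_one, hx, hc', one_mul, Coprod.lift_apply_inl, Coprod.lift_apply_inr,
    MonoidHom.inl_apply, MonoidHom.inr_apply, Prod.mk_mul_mk, mul_one] at e2
  have h1 : h' = 1 := (congrArg Prod.fst e2).symm
  have h2 : k' = 1 := (congrArg Prod.snd e2).symm
  subst h1 h2
  simp only [map_one, one_mul, mul_one] at e
  rw [e]; exact hc
end

section
/- Let B and A be groups and let π : B ∗ A → B be the homomorphism from the free product that is the identity on B and trivial on A. Then the kernel of π is generated, as a subgroup of B ∗ A, by the formal conjugates inl(b) * inr(a) * inl(b)⁻¹ for b ∈ B, a ∈ A. (This is the paper's description, in the category of groups, of the object B ♭ A = ker([1,0] : B + A → B) as the group generated by formal conjugates.) -/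
open Monoid

/-- The object `B ♭ A` in groups: the kernel of the homomorphism
`π : B ∗ A → B` (identity on `B`, trivial on `A`) is generated by the formal
conjugates `inl b * inr a * (inl b)⁻¹` for `b ∈ B`, `a ∈ A`. -/
theorem ker_pi_eq_closure_formal_conjugates (B A : Type*) [Group B] [Group A] :
    (Coprod.lift (MonoidHom.id B) (1 : A →* B)).ker =
      Subgroup.closure
        {x : Coprod B A | ∃ b : B, ∃ a : A,
          x = Coprod.inl b * Coprod.inr a * (Coprod.inl b)⁻¹} := by
  apply le_antisymm
  · have key : ∀ x : Coprod B A, ∀ c : B,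
        Coprod.inl c * x *
          (Coprod.inl (c * Coprod.lift (MonoidHom.id B) (1 : A →* B) x))⁻¹ ∈
        Subgroup.closure {x : Coprod B A | ∃ b : B, ∃ a : A,
          x = Coprod.inl b * Coprod.inr a * (Coprod.inl b)⁻¹} := by
      intro x
      induction x using Coprod.induction_on' with
      | one => intro c; simp
      | inl_mul m x ih =>
        intro c
        have h := ih (c * m)
        rw [map_mul (Coprod.lift _ _), Coprod.lift_apply_inl, MonoidHom.id_apply, ← mul_assoc c,
          ← mul_assoc, ← map_mul]
        exact h
      | inr_mul n x ih =>
        intro c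
        have h := mul_mem (Subgroup.subset_closure (Set.mem_setOf.2 ⟨c, n, rfl⟩)) (ih c)
        rw [map_mul (Coprod.lift _ _), Coprod.lift_apply_inr, MonoidHom.one_apply, one_mul]
        convert h using 1
        group
    intro x hx
    have h := key x 1
    rw [MonoidHom.mem_ker] at hx
    rw [hx] at h
    simpa using h
  · rw [Subgroup.closure_le]
    rintro _ ⟨b, a, rfl⟩
    simp [MonoidHom.mem_ker]
end

section
/- Let X be a group and let f : A → B be a surjective group homomorphism. Consider the induced homomorphism F = (id_X) ∗ f : X ∗ A → X ∗ B between free products, and the projections π_A : X ∗ A → X and π_B : X ∗ B → X that are the identity on X and trivial on A (resp. B). Then F maps the kernel of π_A onto the kernel of π_B, i.e. the image of ker(π_A) under F equals ker(π_B). (Group-theoretic case of Lemma: in an ideal-determined category, the functor X ♭ (−) preserves regular epimorphisms.) -/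
open Monoid

/-- The functor `X ♭ (−)` preserves surjections in groups: if `f : A → B` is a
surjective homomorphism and `F = id_X ∗ f : X ∗ A → X ∗ B`, then `F` maps the
kernel of `π_A : X ∗ A → X` onto the kernel of `π_B : X ∗ B → X`. -/
theorem map_ker_pi_flat {X A B : Type*} [Group X] [Group A] [Group B]
    (f : A →* B) (hf : Function.Surjective f) :
    Subgroup.map (Coprod.map (MonoidHom.id X) f)
        (Coprod.lift (MonoidHom.id X) (1 : A →* X)).ker =
      (Coprod.lift (MonoidHom.id X) (1 : B →* X)).ker := by
  have hc : ∀ v, Coprod.lift (MonoidHom.id X) (1 : B →* X) (Coprod.map (MonoidHom.id X) f v) =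
      Coprod.lift (MonoidHom.id X) (1 : A →* X) v := by
    have h : (Coprod.lift (MonoidHom.id X) (1 : B →* X)).comp (Coprod.map (MonoidHom.id X) f) =
        Coprod.lift (MonoidHom.id X) (1 : A →* X) := Coprod.hom_ext rfl rfl
    intro v
    exact DFunLike.congr_fun h v
  have hs : ∀ w, ∃ v, Coprod.map (MonoidHom.id X) f v = w := by
    intro w
    induction w using Coprod.induction_on with
    | inl x => exact ⟨Coprod.inl x, rfl⟩
    | inr b =>
      obtain ⟨a, rfl⟩ := hf b
      exact ⟨Coprod.inr a, rfl⟩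
    | mul p q hp hq =>
      obtain ⟨p', rfl⟩ := hp
      obtain ⟨q', rfl⟩ := hq
      exact ⟨p' * q', map_mul _ _ _⟩
  ext w
  constructor
  · rintro ⟨v, hv, rfl⟩
    exact MonoidHom.mem_ker.2 ((hc v).trans (MonoidHom.mem_ker.1 hv))
  · intro hw
    obtain ⟨v, rfl⟩ := hs w
    exact ⟨v, MonoidHom.mem_ker.2 ((hc v).symm.trans (MonoidHom.mem_ker.1 hw)), rfl⟩
end

section
/- Let X be a group and let f : A → B be a surjective group homomorphism. Consider the induced homomorphism F = (id_X) ∗ f : X ∗ A → X ∗ B between free products, and the canonical homomorphisms Σ_{X,A} : X ∗ A → X × A and Σ_{X,B} : X ∗ B → X × B induced by the inclusions. Then F maps the kernel of Σ_{X,A} onto the kernel of Σ_{X,B}, i.e. the image of ker(Σ_{X,A}) under F equals ker(Σ_{X,B}). (Group-theoretic case of Lemma: in an ideal-determined category, the functor X ⋄ (−) preserves regular epimorphisms.) -/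
open Monoid

/-- The functor `X ⋄ (−)` preserves surjections in groups: if `f : A → B` is a
surjective homomorphism and `F = id_X ∗ f : X ∗ A → X ∗ B`, then `F` maps the
kernel of `Σ_{X,A} : X ∗ A → X × A` onto the kernel of `Σ_{X,B} : X ∗ B → X × B`. -/
theorem map_ker_sigma_diamond {X A B : Type*} [Group X] [Group A] [Group B]
    (f : A →* B) (hf : Function.Surjective f) :
    Subgroup.map (Coprod.map (MonoidHom.id X) f)
        (Coprod.lift (MonoidHom.inl X A) (MonoidHom.inr X A)).ker =
      (Coprod.lift (MonoidHom.inl X B) (MonoidHom.inr X B)).ker := by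
  have hc : ∀ w : Coprod X A,
      Coprod.lift (MonoidHom.inl X B) (MonoidHom.inr X B) (Coprod.map (MonoidHom.id X) f w) =
        MonoidHom.prodMap (MonoidHom.id X) f
          (Coprod.lift (MonoidHom.inl X A) (MonoidHom.inr X A) w) := by
    intro w
    induction w using Coprod.induction_on with
    | inl x => simp
    | inr a => simp
    | mul u v hu hv => simp only [map_mul, hu, hv]
  have hs : ∀ y : Coprod X B, ∃ w : Coprod X A, Coprod.map (MonoidHom.id X) f w = y := by
    intro y
    induction y using Coprod.induction_on with
    | inl x => exact ⟨Coprod.inl x, by simp⟩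
    | inr b =>
      obtain ⟨a, rfl⟩ := hf b
      exact ⟨Coprod.inr a, by simp⟩
    | mul u v hu hv =>
      obtain ⟨u, rfl⟩ := hu
      obtain ⟨v, rfl⟩ := hv
      exact ⟨u * v, map_mul _ _ _⟩
  ext y
  constructor
  · rintro ⟨w, hw, rfl⟩
    have hw' : Coprod.lift (MonoidHom.inl X A) (MonoidHom.inr X A) w = 1 := hw
    rw [MonoidHom.mem_ker, hc, hw', map_one]
  · intro hy
    obtain ⟨w, rfl⟩ := hs y
    rw [MonoidHom.mem_ker, hc] at hy
    rcases h : Coprod.lift (MonoidHom.inl X A) (MonoidHom.inr X A) w with ⟨x, a⟩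
    rw [h] at hy
    have h1 : x = 1 := congrArg Prod.fst hy
    have h2 : f a = 1 := congrArg Prod.snd hy
    refine ⟨w * Coprod.inr a⁻¹, ?_, ?_⟩
    · change Coprod.lift (MonoidHom.inl X A) (MonoidHom.inr X A) (w * Coprod.inr a⁻¹) = 1
      rw [map_mul, h, Coprod.lift_apply_inr, h1]
      ext <;> simp
    · rw [map_mul, Coprod.map_apply_inr, map_inv, h2]
      simp
end

section
/- In the alternating group A₅ on five letters, let H be the subgroup generated by the double transposition (1 2)(3 4) and K the subgroup generated by (1 2)(4 5). Then the commutator subgroup ⁅H, K⁆ equals the subgroup generated by the 3-cycle (3 4 5), while the normal closure of ⁅H, K⁆ in A₅ is all of A₅; in particular ⁅H, K⁆ is strictly smaller than its normal closure, so Higgins' commutator [H,K]_H differs from Huq's commutator [H,K]_Q. (Example in the paper.) -/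
theorem mem_closure_invol {G : Type*} [Group G] {a x : G} (ha : a * a = 1)
    (hx : x ∈ Subgroup.closure {a}) : x = 1 ∨ x = a := by
  have hi : a⁻¹ = a := inv_eq_of_mul_eq_one_left ha
  induction hx using Subgroup.closure_induction with
  | mem x hx => right; simpa using hx
  | one => left; rfl
  | mul x y _ _ h1 h2 =>
    rcases h1 with rfl | rfl <;> rcases h2 with rfl | rfl <;> simp [ha]
  | inv x _ h => rcases h with rfl | rfl <;> simp [hi]

open scoped commutatorElement in
theorem comm_closure_invol {G : Type*} [Group G] {a b c : G} (ha : a * a = 1) (hb : b * b = 1)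
    (hc : a * b = c) (h3 : c ^ 4 = c) :
    ⁅Subgroup.closure {a}, Subgroup.closure {b}⁆ = Subgroup.closure {c} := by
  have hai : a⁻¹ = a := inv_eq_of_mul_eq_one_left ha
  have hbi : b⁻¹ = b := inv_eq_of_mul_eq_one_left hb
  have hab : ⁅a, b⁆ = c ^ 2 := by
    rw [commutatorElement_def, hai, hbi, ← hc, pow_two, mul_assoc, mul_assoc]
  apply le_antisymm
  · rw [Subgroup.commutator_le]
    intro x hx y hy
    rcases mem_closure_invol ha hx with rfl | rfl
    · simp
    rcases mem_closure_invol hb hy with rfl | rfl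
    · simp
    rw [hab]
    exact Subgroup.pow_mem _ (Subgroup.subset_closure (Set.mem_singleton c)) 2
  · rw [Subgroup.closure_le, Set.singleton_subset_iff]
    have h := Subgroup.commutator_mem_commutator (Subgroup.subset_closure (Set.mem_singleton a))
      (Subgroup.subset_closure (Set.mem_singleton b))
    rw [hab] at h
    have h2 := Subgroup.pow_mem _ h 2
    rw [← pow_mul, h3] at h2
    exact h2

/-- In `A₅` (permutations of `Fin 5`, zero-indexed), with
`H = ⟨(1 2)(3 4)⟩ = ⟨swap 0 1 * swap 2 3⟩` and
`K = ⟨(1 2)(4 5)⟩ = ⟨swap 0 1 * swap 3 4⟩`, the commutator subgroup `⁅H, K⁆`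
equals the subgroup generated by the 3-cycle `(3 4 5) = swap 2 3 * swap 3 4`,
while the normal closure of `⁅H, K⁆` is all of `A₅`; in particular `⁅H, K⁆`
is strictly smaller than its normal closure. -/
theorem higgins_ne_huq_in_A5
    (H : Subgroup (alternatingGroup (Fin 5)))
    (K : Subgroup (alternatingGroup (Fin 5)))
    (hH : H = Subgroup.closure
      {(⟨Equiv.swap 0 1 * Equiv.swap 2 3,
          by rw [Equiv.Perm.mem_alternatingGroup]; decide⟩ : alternatingGroup (Fin 5))})
    (hK : K = Subgroup.closure
      {(⟨Equiv.swap 0 1 * Equiv.swap 3 4,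
          by rw [Equiv.Perm.mem_alternatingGroup]; decide⟩ : alternatingGroup (Fin 5))}) :
    ⁅H, K⁆ = Subgroup.closure
        {(⟨Equiv.swap 2 3 * Equiv.swap 3 4,
            by rw [Equiv.Perm.mem_alternatingGroup]; decide⟩ : alternatingGroup (Fin 5))} ∧
      Subgroup.normalClosure ((⁅H, K⁆ : Subgroup (alternatingGroup (Fin 5))) :
          Set (alternatingGroup (Fin 5))) = ⊤ ∧
      ⁅H, K⁆ < Subgroup.normalClosure ((⁅H, K⁆ : Subgroup (alternatingGroup (Fin 5))) :
          Set (alternatingGroup (Fin 5))) := by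
  have h1 := comm_closure_invol
    (a := (⟨Equiv.swap 0 1 * Equiv.swap 2 3,
          by rw [Equiv.Perm.mem_alternatingGroup]; decide⟩ : alternatingGroup (Fin 5)))
    (b := (⟨Equiv.swap 0 1 * Equiv.swap 3 4,
          by rw [Equiv.Perm.mem_alternatingGroup]; decide⟩ : alternatingGroup (Fin 5)))
    (c := (⟨Equiv.swap 2 3 * Equiv.swap 3 4,
          by rw [Equiv.Perm.mem_alternatingGroup]; decide⟩ : alternatingGroup (Fin 5)))
    (Subtype.ext (by decide)) (Subtype.ext (by decide)) (Subtype.ext (by decide))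
    (Subtype.ext (by
      change (Equiv.swap 2 3 * Equiv.swap 3 4 : Equiv.Perm (Fin 5)) ^ 4 = _
      decide))
  rw [← hH, ← hK] at h1
  have h2 : Subgroup.normalClosure ((⁅H, K⁆ : Subgroup (alternatingGroup (Fin 5))) :
          Set (alternatingGroup (Fin 5))) = ⊤ := by
    rcases Subgroup.Normal.eq_bot_or_eq_top (Subgroup.normalClosure_normal
      (s := ((⁅H, K⁆ : Subgroup (alternatingGroup (Fin 5))) :
          Set (alternatingGroup (Fin 5))))) with h | h
    · exfalso
      have h3 := Subgroup.subset_normalClosure.trans h.le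
      rw [h1] at h3
      have h4 := h3 (Subgroup.subset_closure rfl)
      have h5 := congrArg Subtype.val (Subgroup.mem_bot.1 h4)
      revert h5
      decide
    · exact h
  refine ⟨h1, h2, ?_⟩
  rw [h2, h1, lt_top_iff_ne_top]
  intro h
  have h3 : (⟨Equiv.swap 0 1 * Equiv.swap 2 3,
          by rw [Equiv.Perm.mem_alternatingGroup]; decide⟩ : alternatingGroup (Fin 5)) ∈
      (⊤ : Subgroup (alternatingGroup (Fin 5))) := Subgroup.mem_top _
  rw [← h, Subgroup.mem_closure_singleton] at h3
  obtain ⟨n, hn⟩ := h3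
  have h5 := congrArg Subtype.val ((Commute.refl (⟨Equiv.swap 2 3 * Equiv.swap 3 4,
          by rw [Equiv.Perm.mem_alternatingGroup]; decide⟩ : alternatingGroup (Fin 5))).zpow_left n).eq
  rw [hn] at h5
  revert h5
  decide
end

section
/- In the alternating group A₆ on six letters, let H be the subgroup generated by the 3-cycle (1 2 3) and K the subgroup generated by (4 5 6), and let H̄ and K̄ be their normal closures in A₆. Then ⁅H, K⁆ is the trivial subgroup, while ⁅H̄, K̄⁆ = A₆. In particular, Huq's commutator does not commute with normalization: [H,K]_Q = 0 but [H̄,K̄]_Q = A₆. (Example in the paper, showing that [H,K] = [H̄,K̄] can fail when neither subobject is the whole object.) -/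
/-- In `A₆` (permutations of `Fin 6`, zero-indexed), with
`H = ⟨(1 2 3)⟩ = ⟨swap 0 1 * swap 1 2⟩` and `K = ⟨(4 5 6)⟩ = ⟨swap 3 4 * swap 4 5⟩`,
and `H̄`, `K̄` their normal closures in `A₆`, one has `⁅H, K⁆ = ⊥` while
`⁅H̄, K̄⁆ = ⊤`: Huq's commutator does not commute with normalization. -/
theorem commutator_normalClosure_in_A6
    (H : Subgroup (alternatingGroup (Fin 6)))
    (K : Subgroup (alternatingGroup (Fin 6)))
    (hH : H = Subgroup.closure
      {(⟨Equiv.swap 0 1 * Equiv.swap 1 2,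
          by rw [Equiv.Perm.mem_alternatingGroup]; decide⟩ : alternatingGroup (Fin 6))})
    (hK : K = Subgroup.closure
      {(⟨Equiv.swap 3 4 * Equiv.swap 4 5,
          by rw [Equiv.Perm.mem_alternatingGroup]; decide⟩ : alternatingGroup (Fin 6))}) :
    ⁅H, K⁆ = ⊥ ∧
      ⁅Subgroup.normalClosure (H : Set (alternatingGroup (Fin 6))),
        Subgroup.normalClosure (K : Set (alternatingGroup (Fin 6)))⁆ = ⊤ := by
  have hs : IsSimpleGroup (alternatingGroup (Fin 6)) :=
    alternatingGroup.isSimpleGroup (by simp)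
  have key : ∀ (L : Subgroup (alternatingGroup (Fin 6))) (x : alternatingGroup (Fin 6)),
      x ∈ L → x ≠ 1 → Subgroup.normalClosure (L : Set (alternatingGroup (Fin 6))) = ⊤ := by
    intro L x hx hne
    rcases (Subgroup.normalClosure_normal
      (s := (L : Set (alternatingGroup (Fin 6))))).eq_bot_or_eq_top with h | h
    · have hm : x ∈ Subgroup.normalClosure (L : Set (alternatingGroup (Fin 6))) :=
        Subgroup.subset_normalClosure hx
      rw [h, Subgroup.mem_bot] at hm
      exact absurd hm hne
    · exact h
  constructor
  · rw [hH, hK, Subgroup.commutator_eq_bot_iff_le_centralizer, Subgroup.closure_le,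
      Subgroup.centralizer_closure]
    rintro x rfl
    simp only [SetLike.mem_coe, Subgroup.mem_centralizer_iff]
    rintro y rfl
    apply Subtype.ext
    decide
  · rw [key H _ (hH ▸ Subgroup.subset_closure (Set.mem_singleton _))
        (fun h => absurd (congrArg Subtype.val h) (by decide)),
      key K _ (hK ▸ Subgroup.subset_closure (Set.mem_singleton _))
        (fun h => absurd (congrArg Subtype.val h) (by decide))]
    rcases (Subgroup.commutator_normal (⊤ : Subgroup (alternatingGroup (Fin 6)))
      ⊤).eq_bot_or_eq_top with h | h
    · exfalso
      rw [Subgroup.commutator_eq_bot_iff_le_centralizer] at h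
      have hc := Subgroup.mem_centralizer_iff.1 (h (Subgroup.mem_top
        (⟨Equiv.swap 0 1 * Equiv.swap 1 2,
          by rw [Equiv.Perm.mem_alternatingGroup]; decide⟩ : alternatingGroup (Fin 6))))
        (⟨Equiv.swap 1 2 * Equiv.swap 2 3,
          by rw [Equiv.Perm.mem_alternatingGroup]; decide⟩ : alternatingGroup (Fin 6))
        (by simp)
      exact absurd (congrArg Subtype.val hc) (by decide)
    · exact h
end
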